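/- Let μ₁, ν₁ be probability measures on a measurable space Ω₁ and μ₂, ν₂ probability measures on a measurable space Ω₂, let α > 1, ε₁, ε₂ ≥ 0, and δ₁, δ₂ ∈ (0,1). Suppose there are measurable events E₁ ⊆ Ω₁, E₂ ⊆ Ω₂, E₁' ⊆ Ω₁, E₂' ⊆ Ω₂ with μ₁(E₁) > 1−δ₁, ν₁(E₁') > 1−δ₁, μ₂(E₂) > 1−δ₂, ν₂(E₂') > 1−δ₂, such that the conditional measures satisfy μᵢ(·|Eᵢ) ≪ νᵢ(·|Eᵢ') and D_α(μᵢ(·|Eᵢ) ‖ νᵢ(·|Eᵢ')) ≤ εᵢ for i = 1, 2. Then there exist measurable events E ⊆ Ω₁ × Ω₂ and E' ⊆ Ω₁ × Ω₂ (namely E = E₁ × E₂ and E' = E₁' × E₂') with (μ₁ × μ₂)(E) > 1−(δ₁+δ₂), (ν₁ × ν₂)(E') > 1−(δ₁+δ₂), and D_α((μ₁ × μ₂)(·|E) ‖ (ν₁ × ν₂)(·|E')) ≤ ε₁ + ε₂. (This is the measure-level form of the paper's lemma 'Adaptive Composition of approximated RDP' for two mechanisms.) -/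

import Mathlib

open MeasureTheory ProbabilityTheory Real
open scoped ENNReal ProbabilityTheory

/-- Rényi divergence of order `α`:
`D_α(μ‖ν) = (α−1)⁻¹ · log ∫ (dμ/dν)^α dν`. -/
noncomputable def renyiDiv {Ω : Type*} [MeasurableSpace Ω] (α : ℝ) (μ ν : Measure Ω) : ℝ :=
  (α - 1)⁻¹ * Real.log ((∫⁻ x, μ.rnDeriv ν x ^ α ∂ν).toReal)

/-! The Rényi divergence is a logarithm of the Hellinger integral `∫ (dμ/dν)^α dν`. The density of a
product measure is the product of the densities, so by Tonelli the Hellinger integral is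
multiplicative and the divergence additive over products. A product measure conditioned on a
rectangle is the product of the conditioned factors, which transfers this to the conditional
measures; the rectangle is large enough because `(1 - δ₁) (1 - δ₂) ≥ 1 - (δ₁ + δ₂)`. -/

/-- The Hellinger integral `∫ (dμ/dν)^α dν` of order `α`, the argument of the logarithm in
`renyiDiv`. It takes values in `ℝ≥0∞`, so that its multiplicativity over products needs no
integrability assumption. -/
noncomputable def hellingerIntegral {Ω : Type*} [MeasurableSpace Ω] (α : ℝ) (μ ν : Measure Ω) :
    ℝ≥0∞ :=
  ∫⁻ x, μ.rnDeriv ν x ^ α ∂ν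

lemma renyiDiv_eq_log_hellingerIntegral {Ω : Type*} [MeasurableSpace Ω] (α : ℝ)
    (μ ν : Measure Ω) :
    renyiDiv α μ ν = (α - 1)⁻¹ * Real.log (hellingerIntegral α μ ν).toReal :=
  rfl

lemma ofReal_one_sub_add_le_mul {a b : ℝ} (ha : 0 ≤ a) (hb : 0 ≤ b) :
    ENNReal.ofReal (1 - (a + b)) ≤ ENNReal.ofReal (1 - a) * ENNReal.ofReal (1 - b) := by
  rcases le_total a 1 with ha₁ | ha₁
  · rw [← ENNReal.ofReal_mul (sub_nonneg.2 ha₁)]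
    exact ENNReal.ofReal_le_ofReal (by nlinarith [mul_nonneg ha hb])
  · rw [ENNReal.ofReal_of_nonpos (by linarith)]
    exact zero_le

section Prod

variable {Ω₁ Ω₂ : Type*} [MeasurableSpace Ω₁] [MeasurableSpace Ω₂]

lemma ofReal_one_sub_add_lt_prod {μ₁ : Measure Ω₁} {μ₂ : Measure Ω₂} [SFinite μ₂] {δ₁ δ₂ : ℝ}
    (hδ₁ : 0 ≤ δ₁) (hδ₂ : 0 ≤ δ₂) {s : Set Ω₁} {t : Set Ω₂}
    (hs : ENNReal.ofReal (1 - δ₁) < μ₁ s) (ht : ENNReal.ofReal (1 - δ₂) < μ₂ t) :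
    ENNReal.ofReal (1 - (δ₁ + δ₂)) < (μ₁.prod μ₂) (s ×ˢ t) :=
  calc ENNReal.ofReal (1 - (δ₁ + δ₂))
      ≤ ENNReal.ofReal (1 - δ₁) * ENNReal.ofReal (1 - δ₂) := ofReal_one_sub_add_le_mul hδ₁ hδ₂
    _ < μ₁ s * μ₂ t := ENNReal.mul_lt_mul hs ht
    _ = (μ₁.prod μ₂) (s ×ˢ t) := (Measure.prod_prod s t).symm

lemma cond_prod_prod {μ₁ : Measure Ω₁} {μ₂ : Measure Ω₂} [SFinite μ₁] [SFinite μ₂] {s : Set Ω₁}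
    {t : Set Ω₂} (hs : μ₁ s ≠ ∞) (ht : μ₂ t ≠ ∞) :
    (μ₁.prod μ₂)[|s ×ˢ t] = (μ₁[|s]).prod (μ₂[|t]) := by
  simp only [ProbabilityTheory.cond]
  rw [Measure.prod_smul_left, Measure.prod_smul_right, Measure.prod_restrict, Measure.prod_prod,
    smul_smul, ENNReal.mul_inv (.inr ht) (.inl hs)]

variable {μ₁ ν₁ : Measure Ω₁} {μ₂ ν₂ : Measure Ω₂}
  [SFinite μ₁] [SigmaFinite ν₁] [SFinite μ₂] [SigmaFinite ν₂]

lemma rnDeriv_prod (h₁ : μ₁ ≪ ν₁) (h₂ : μ₂ ≪ ν₂) :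
    (μ₁.prod μ₂).rnDeriv (ν₁.prod ν₂) =ᵐ[ν₁.prod ν₂]
      fun z ↦ μ₁.rnDeriv ν₁ z.1 * μ₂.rnDeriv ν₂ z.2 := by
  have prod_eq_withDensity : μ₁.prod μ₂ =
      (ν₁.prod ν₂).withDensity fun z ↦ μ₁.rnDeriv ν₁ z.1 * μ₂.rnDeriv ν₂ z.2 := by
    rw [← prod_withDensity (Measure.measurable_rnDeriv _ _) (Measure.measurable_rnDeriv _ _),
      Measure.withDensity_rnDeriv_eq _ _ h₁, Measure.withDensity_rnDeriv_eq _ _ h₂]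
  rw [prod_eq_withDensity]
  exact Measure.rnDeriv_withDensity _ (by fun_prop)

variable {α : ℝ}

lemma hellingerIntegral_prod (h₁ : μ₁ ≪ ν₁) (h₂ : μ₂ ≪ ν₂) (hα : 0 ≤ α) :
    hellingerIntegral α (μ₁.prod μ₂) (ν₁.prod ν₂) =
      hellingerIntegral α μ₁ ν₁ * hellingerIntegral α μ₂ ν₂ :=
  calc ∫⁻ z, (μ₁.prod μ₂).rnDeriv (ν₁.prod ν₂) z ^ α ∂(ν₁.prod ν₂)
      = ∫⁻ z, μ₁.rnDeriv ν₁ z.1 ^ α * μ₂.rnDeriv ν₂ z.2 ^ α ∂(ν₁.prod ν₂) := by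
        refine lintegral_congr_ae ?_
        filter_upwards [rnDeriv_prod h₁ h₂] with z hz
        rw [hz, ENNReal.mul_rpow_of_nonneg _ _ hα]
    _ = (∫⁻ x, μ₁.rnDeriv ν₁ x ^ α ∂ν₁) * ∫⁻ y, μ₂.rnDeriv ν₂ y ^ α ∂ν₂ := by
        rw [← lintegral_prod_mul (by fun_prop) (by fun_prop)]

lemma renyiDiv_prod (h₁ : μ₁ ≪ ν₁) (h₂ : μ₂ ≪ ν₂) (hα : 0 ≤ α)
    (hI₁ : (hellingerIntegral α μ₁ ν₁).toReal ≠ 0)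
    (hI₂ : (hellingerIntegral α μ₂ ν₂).toReal ≠ 0) :
    renyiDiv α (μ₁.prod μ₂) (ν₁.prod ν₂) = renyiDiv α μ₁ ν₁ + renyiDiv α μ₂ ν₂ := by
  simp only [renyiDiv_eq_log_hellingerIntegral]
  rw [hellingerIntegral_prod h₁ h₂ hα, ENNReal.toReal_mul, Real.log_mul hI₁ hI₂, mul_add]

lemma renyiDiv_prod_le {ε₁ ε₂ : ℝ} (h₁ : μ₁ ≪ ν₁) (h₂ : μ₂ ≪ ν₂) (hα : 0 ≤ α)
    (hε₁ : 0 ≤ ε₁) (hε₂ : 0 ≤ ε₂)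
    (hD₁ : renyiDiv α μ₁ ν₁ ≤ ε₁) (hD₂ : renyiDiv α μ₂ ν₂ ≤ ε₂) :
    renyiDiv α (μ₁.prod μ₂) (ν₁.prod ν₂) ≤ ε₁ + ε₂ := by
  by_cases hI : (hellingerIntegral α μ₁ ν₁).toReal = 0 ∨ (hellingerIntegral α μ₂ ν₂).toReal = 0
  · -- If a Hellinger integral is `0` or `∞`, the conventions `∞.toReal = 0` and `Real.log 0 = 0`
    -- make the divergence of the products `0`.
    have prod_eq_zero : renyiDiv α (μ₁.prod μ₂) (ν₁.prod ν₂) = 0 := by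
      rw [renyiDiv_eq_log_hellingerIntegral, hellingerIntegral_prod h₁ h₂ hα, ENNReal.toReal_mul,
        mul_eq_zero.2 hI, Real.log_zero, mul_zero]
    exact prod_eq_zero.trans_le (add_nonneg hε₁ hε₂)
  · obtain ⟨hI₁, hI₂⟩ := not_or.1 hI
    exact (renyiDiv_prod h₁ h₂ hα hI₁ hI₂).trans_le (add_le_add hD₁ hD₂)

end Prod

theorem approx_rdp_composition_two_general {Ω₁ Ω₂ : Type*} [MeasurableSpace Ω₁]
    [MeasurableSpace Ω₂] {μ₁ ν₁ : Measure Ω₁} {μ₂ ν₂ : Measure Ω₂}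
    [IsFiniteMeasure μ₁] [IsFiniteMeasure ν₁] [IsFiniteMeasure μ₂] [IsFiniteMeasure ν₂]
    {α ε₁ ε₂ δ₁ δ₂ : ℝ} (hα₀ : 0 < α) (_hα₁ : α ≠ 1) (hε₁ : 0 ≤ ε₁) (hε₂ : 0 ≤ ε₂)
    (hδ₁ : 0 ≤ δ₁) (hδ₂ : 0 ≤ δ₂) {E₁ E₁' : Set Ω₁} {E₂ E₂' : Set Ω₂}
    (hμ₁ : ENNReal.ofReal (1 - δ₁) < μ₁ E₁) (hν₁ : ENNReal.ofReal (1 - δ₁) < ν₁ E₁')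
    (hμ₂ : ENNReal.ofReal (1 - δ₂) < μ₂ E₂) (hν₂ : ENNReal.ofReal (1 - δ₂) < ν₂ E₂')
    (hac₁ : μ₁[|E₁] ≪ ν₁[|E₁']) (hac₂ : μ₂[|E₂] ≪ ν₂[|E₂'])
    (hD₁ : renyiDiv α (μ₁[|E₁]) (ν₁[|E₁']) ≤ ε₁)
    (hD₂ : renyiDiv α (μ₂[|E₂]) (ν₂[|E₂']) ≤ ε₂) :
    ENNReal.ofReal (1 - (δ₁ + δ₂)) < (μ₁.prod μ₂) (E₁ ×ˢ E₂) ∧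
      ENNReal.ofReal (1 - (δ₁ + δ₂)) < (ν₁.prod ν₂) (E₁' ×ˢ E₂') ∧
      renyiDiv α ((μ₁.prod μ₂)[|E₁ ×ˢ E₂]) ((ν₁.prod ν₂)[|E₁' ×ˢ E₂']) ≤ ε₁ + ε₂ := by
  refine ⟨ofReal_one_sub_add_lt_prod hδ₁ hδ₂ hμ₁ hμ₂,
    ofReal_one_sub_add_lt_prod hδ₁ hδ₂ hν₁ hν₂, ?_⟩
  rw [cond_prod_prod (measure_ne_top _ _) (measure_ne_top _ _),
    cond_prod_prod (measure_ne_top _ _) (measure_ne_top _ _)]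
  exact renyiDiv_prod_le hac₁ hac₂ hα₀.le hε₁ hε₂ hD₁ hD₂

/-- Adaptive composition of approximated RDP for two mechanisms (measure-level form):
the product events `E₁ × E₂` and `E₁' × E₂'` witness
`(δ₁+δ₂)`-approximate-`(α, ε₁+ε₂)`-RDP for the product measures. -/
theorem approx_rdp_composition_two {Ω₁ Ω₂ : Type*} [MeasurableSpace Ω₁] [MeasurableSpace Ω₂]
    (μ₁ ν₁ : Measure Ω₁) (μ₂ ν₂ : Measure Ω₂)
    [IsProbabilityMeasure μ₁] [IsProbabilityMeasure ν₁]
    [IsProbabilityMeasure μ₂] [IsProbabilityMeasure ν₂]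
    (α ε₁ ε₂ δ₁ δ₂ : ℝ) (hα : 1 < α) (hε₁ : 0 ≤ ε₁) (hε₂ : 0 ≤ ε₂)
    (hδ₁ : δ₁ ∈ Set.Ioo (0 : ℝ) 1) (hδ₂ : δ₂ ∈ Set.Ioo (0 : ℝ) 1)
    (E₁ E₁' : Set Ω₁) (E₂ E₂' : Set Ω₂)
    (hE₁ : MeasurableSet E₁) (hE₁' : MeasurableSet E₁')
    (hE₂ : MeasurableSet E₂) (hE₂' : MeasurableSet E₂')
    (hμ₁ : ENNReal.ofReal (1 - δ₁) < μ₁ E₁) (hν₁ : ENNReal.ofReal (1 - δ₁) < ν₁ E₁')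
    (hμ₂ : ENNReal.ofReal (1 - δ₂) < μ₂ E₂) (hν₂ : ENNReal.ofReal (1 - δ₂) < ν₂ E₂')
    (hac₁ : μ₁[|E₁] ≪ ν₁[|E₁']) (hac₂ : μ₂[|E₂] ≪ ν₂[|E₂'])
    (hD₁ : renyiDiv α (μ₁[|E₁]) (ν₁[|E₁']) ≤ ε₁)
    (hD₂ : renyiDiv α (μ₂[|E₂]) (ν₂[|E₂']) ≤ ε₂) :
    ∃ E E' : Set (Ω₁ × Ω₂), E = E₁ ×ˢ E₂ ∧ E' = E₁' ×ˢ E₂' ∧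
      MeasurableSet E ∧ MeasurableSet E' ∧
      ENNReal.ofReal (1 - (δ₁ + δ₂)) < (μ₁.prod μ₂) E ∧
      ENNReal.ofReal (1 - (δ₁ + δ₂)) < (ν₁.prod ν₂) E' ∧
      renyiDiv α ((μ₁.prod μ₂)[|E]) ((ν₁.prod ν₂)[|E']) ≤ ε₁ + ε₂ :=
  ⟨E₁ ×ˢ E₂, E₁' ×ˢ E₂', rfl, rfl, hE₁.prod hE₂, hE₁'.prod hE₂',
    approx_rdp_composition_two_general (zero_lt_one.trans hα) hα.ne' hε₁ hε₂ hδ₁.1.le hδ₂.1.le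
      hμ₁ hν₁ hμ₂ hν₂ hac₁ hac₂ hD₁ hD₂⟩
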